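/- Let φ : (0,∞) → (0,∞) be convex and strictly decreasing, K, L star bodies in ℝⁿ, and 0 ≤ i < n. Then φ(1) ≥ φ( (W̃ᵢ(K)/W̃ᵢ(K+̂_φL))^{1/(n-i)} ) + φ( (W̃ᵢ(L)/W̃ᵢ(K+̂_φL))^{1/(n-i)} ). If φ is strictly convex, equality holds if and only if K and L are dilates. -/

import Mathlib

open MeasureTheory Metric Set Real

/-- The surface (spherical) measure on the unit sphere `S^{n-1} ⊆ ℝⁿ`. -/
noncomputable def sphereσ (n : ℕ) : Measure (sphere (0 : EuclideanSpace ℝ (Fin n)) 1) :=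
  μH[(n : ℝ) - 1]

/-!
The substitution `x = t ^ (1 / (n - i))` turns `φ` into `t ↦ φ (t ^ (1 / (n - i)))`, which is again
convex because `φ` is convex and decreasing and the power is concave. Jensen's inequality for this
function, applied to `(ρ_M / ρ_Q) ^ (n - i)` with the weight `ρ_Q ^ (n - i)`, is the dual
Orlicz–Minkowski inequality `φ ((W̃ᵢ(M) / W̃ᵢ(Q)) ^ (1 / (n - i))) W̃ᵢ(Q) ≤ W̃_{φ,i}(Q, M)`.
Integrating the equation that defines `Q = K +̂_φ L` gives
`W̃_{φ,i}(Q, K) + W̃_{φ,i}(Q, L) = φ(1) W̃ᵢ(Q)`, so the theorem is the sum of two instances of it.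
Equality forces equality in both instances, and for strictly convex `φ` this makes `K` and `L`
dilates of `Q`. Conversely, if `K` and `L` are dilates, the defining equation makes both of them
dilates of `Q`. The surface measure is finite and charges open sets because stereographic projection
and its inverse are locally Lipschitz.
-/

section HausdorffMeasure

open Filter Topology

variable {M F : Type*} [EMetricSpace M] [MeasurableSpace M] [BorelSpace M]
  [EMetricSpace F] [MeasurableSpace F] [BorelSpace F] {d : ℝ} {K : NNReal}

lemma hausdorffMeasure_finiteAtFilter_map {f : F → M} {y : F} {t : Set F} (hd : 0 ≤ d)
    (hμ : (μH[d] : Measure F).FiniteAtFilter (𝓝 y)) (ht : t ∈ 𝓝 y) (hf : LipschitzOnWith K f t) :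
    (μH[d] : Measure M).FiniteAtFilter (map f (𝓝 y)) := by
  obtain ⟨s, hs, hsμ⟩ := hμ
  refine ⟨f '' (s ∩ t), image_mem_map (inter_mem hs ht), ?_⟩
  calc μH[d] (f '' (s ∩ t)) ≤ (K : ENNReal) ^ d * μH[d] (s ∩ t) :=
        (hf.mono inter_subset_right).hausdorffMeasure_image_le hd
    _ < ⊤ := ENNReal.mul_lt_top (by finiteness)
        ((measure_mono inter_subset_left).trans_lt hsμ)

lemma hausdorffMeasure_pos_of_lipschitzOnWith [(μH[d] : Measure F).IsOpenPosMeasure]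
    {f : M → F} {x : M} {t s : Set M} (hd : 0 ≤ d) (ht : t ∈ 𝓝 x) (hf : LipschitzOnWith K f t)
    (hmap : 𝓝 (f x) ≤ map f (𝓝 x)) (hs : s ∈ 𝓝 x) : 0 < μH[d] s := by
  have himage : 0 < μH[d] (f '' (s ∩ t)) :=
    Measure.measure_pos_of_mem_nhds _ (hmap (image_mem_map (inter_mem hs ht)))
  have hle : μH[d] (f '' (s ∩ t)) ≤ (K : ENNReal) ^ d * μH[d] (s ∩ t) :=
    (hf.mono inter_subset_right).hausdorffMeasure_image_le hd
  exact (pos_of_mul_pos_right (himage.trans_le hle) zero_le).trans_le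
    (measure_mono inter_subset_left)

end HausdorffMeasure

section Sphere

open Filter Module Topology
open scoped RealInnerProductSpace

variable {E : Type*} [NormedAddCommGroup E] [InnerProductSpace ℝ E]

lemma exists_mem_source_stereographic (u : sphere (0 : E) 1) :
    ∃ (v : E) (hv : ‖v‖ = 1), u ∈ (stereographic hv).source := by
  refine ⟨-u, by simp, ?_⟩
  rw [stereographic_source]
  exact fun h => ne_neg_of_mem_unit_sphere ℝ u (Subtype.ext (congrArg Subtype.val h))

lemma exists_lipschitzOnWith_stereographic {v : E} (hv : ‖v‖ = 1) {u : sphere (0 : E) 1}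
    (hu : u ∈ (stereographic hv).source) :
    ∃ K, ∃ t ∈ 𝓝 u, LipschitzOnWith K (stereographic hv) t := by
  have hinner : innerSL ℝ v (u : E) ≠ 1 := by
    rw [innerSL_apply_apply, Ne, inner_eq_one_iff_of_norm_eq_one hv (by simp)]
    exact fun h => hu (Subtype.ext h.symm)
  have hsmooth : ContDiffAt ℝ 1 (stereoToFun v) (u : E) :=
    contDiffOn_stereoToFun.contDiffAt
      (((innerSL ℝ v).continuous.continuousAt).eventually_ne hinner)
  obtain ⟨K, t, ht, hK⟩ := hsmooth.exists_lipschitzOnWith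
  exact ⟨K, _, continuous_subtype_val.continuousAt.preimage_mem_nhds ht,
    fun x hx y hy => hK hx hy⟩

lemma exists_lipschitzOnWith_stereographic_symm {v : E} (hv : ‖v‖ = 1) (w : (ℝ ∙ v)ᗮ) :
    ∃ K, ∃ t ∈ 𝓝 w, LipschitzOnWith K (stereographic hv).symm t := by
  have hsmooth : ContDiff ℝ 1 fun w : (ℝ ∙ v)ᗮ => stereoInvFunAux v (w : E) :=
    contDiff_stereoInvFunAux.comp (ℝ ∙ v)ᗮ.subtypeL.contDiff
  obtain ⟨K, t, ht, hK⟩ := hsmooth.contDiffAt.exists_lipschitzOnWith (x := w)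
  exact ⟨K, t, ht, fun x hx y hy => hK hx hy⟩

variable [FiniteDimensional ℝ E]

lemma finrank_orthogonal_span_singleton_eq_sub_one {v : E} (hv : v ≠ 0) :
    (finrank ℝ (ℝ ∙ v)ᗮ : ℝ) = finrank ℝ E - 1 := by
  rw [← (ℝ ∙ v).finrank_add_finrank_orthogonal, finrank_span_singleton hv]
  push_cast
  ring

variable [MeasurableSpace E] [BorelSpace E]

lemma isFiniteMeasure_hausdorffMeasure_sphere :
    IsFiniteMeasure (μH[finrank ℝ E - 1] : Measure (sphere (0 : E) 1)) := by
  suffices IsLocallyFiniteMeasure (μH[finrank ℝ E - 1] : Measure (sphere (0 : E) 1)) from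
    inferInstance
  refine ⟨fun u => ?_⟩
  obtain ⟨v, hv, hu⟩ := exists_mem_source_stereographic u
  rw [← finrank_orthogonal_span_singleton_eq_sub_one (ne_zero_of_norm_ne_zero (hv ▸ one_ne_zero)),
    ← (stereographic hv).symm_map_nhds_eq hu]
  obtain ⟨K, t, ht, hK⟩ := exists_lipschitzOnWith_stereographic_symm hv (stereographic hv u)
  exact hausdorffMeasure_finiteAtFilter_map (Nat.cast_nonneg _) (Measure.finiteAt_nhds _ _) ht hK

lemma isOpenPosMeasure_hausdorffMeasure_sphere :
    (μH[finrank ℝ E - 1] : Measure (sphere (0 : E) 1)).IsOpenPosMeasure := by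
  refine ⟨fun U hU ⟨u, huU⟩ => ne_of_gt ?_⟩
  obtain ⟨v, hv, hu⟩ := exists_mem_source_stereographic u
  rw [← finrank_orthogonal_span_singleton_eq_sub_one (ne_zero_of_norm_ne_zero (hv ▸ one_ne_zero))]
  obtain ⟨K, t, ht, hK⟩ := exists_lipschitzOnWith_stereographic hv hu
  exact hausdorffMeasure_pos_of_lipschitzOnWith (Nat.cast_nonneg _) ht hK
    ((stereographic hv).map_nhds_eq hu).ge (hU.mem_nhds huU)

instance isFiniteMeasure_sphereσ (n : ℕ) : IsFiniteMeasure (sphereσ n) := by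
  simpa [sphereσ] using isFiniteMeasure_hausdorffMeasure_sphere (E := EuclideanSpace ℝ (Fin n))

instance isOpenPosMeasure_sphereσ (n : ℕ) : (sphereσ n).IsOpenPosMeasure := by
  simpa [sphereσ] using isOpenPosMeasure_hausdorffMeasure_sphere (E := EuclideanSpace ℝ (Fin n))

end Sphere

section ConvexFunctions

variable {φ : ℝ → ℝ} {r : ℝ}

lemma image_rpow_Ioi_zero (hr : r ≠ 0) : (fun t : ℝ => t ^ r) '' Ioi 0 = Ioi 0 :=
  Subset.antisymm (image_subset_iff.2 fun _ ht => rpow_pos_of_pos ht r) fun t ht =>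
    ⟨t ^ r⁻¹, rpow_pos_of_pos ht _, rpow_inv_rpow (mem_Ioi.1 ht).le hr⟩

lemma convexOn_comp_rpow (hφ : ConvexOn ℝ (Ioi 0) φ) (hanti : AntitoneOn φ (Ioi 0))
    (hr₀ : 0 < r) (hr₁ : r ≤ 1) : ConvexOn ℝ (Ioi 0) fun t => φ (t ^ r) := by
  rw [← image_rpow_Ioi_zero hr₀.ne'] at hφ hanti
  exact hφ.comp_concaveOn
    ((concaveOn_rpow hr₀.le hr₁).subset Ioi_subset_Ici_self (convex_Ioi 0)) hanti

lemma strictConvexOn_comp_rpow (hφ : StrictConvexOn ℝ (Ioi 0) φ) (hanti : AntitoneOn φ (Ioi 0))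
    (hr₀ : 0 < r) (hr₁ : r ≤ 1) : StrictConvexOn ℝ (Ioi 0) fun t => φ (t ^ r) := by
  rw [← image_rpow_Ioi_zero hr₀.ne'] at hφ hanti
  exact hφ.comp_concaveOn
    ((concaveOn_rpow hr₀.le hr₁).subset Ioi_subset_Ici_self (convex_Ioi 0)) hanti
    ((rpow_left_injOn hr₀.ne').mono Ioi_subset_Ici_self)

lemma strictAntiOn_of_strictConvexOn_of_antitoneOn {s : Set ℝ} (hφ : StrictConvexOn ℝ s φ)
    (hanti : AntitoneOn φ s) : StrictAntiOn φ s := by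
  intro x hx y hy hxy
  refine (hanti hx hy hxy.le).lt_of_ne fun heq => ?_
  have hmid := hφ.2 hx hy hxy.ne one_half_pos one_half_pos (add_halves 1)
  have hle := hanti (hφ.1 hx hy one_half_pos.le one_half_pos.le (add_halves 1)) hy
    (by simp only [smul_eq_mul]; linarith)
  simp only [smul_eq_mul] at hmid hle
  linarith

end ConvexFunctions

section WithDensity

variable {Y : Type*} [MeasurableSpace Y] {ν : Measure Y} {v : Y → ℝ}

lemma average_withDensity_ofReal (hv : Measurable v) (hv₀ : 0 ≤ v) (h : Y → ℝ) :
    ⨍ y, h y ∂ν.withDensity (fun y => ENNReal.ofReal (v y)) =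
      (∫ y, h y * v y ∂ν) / ∫ y, v y ∂ν := by
  have hintegral (k : Y → ℝ) :
      ∫ y, k y ∂ν.withDensity (fun y => ENNReal.ofReal (v y)) = ∫ y, k y * v y ∂ν := by
    rw [integral_withDensity_eq_integral_toReal_smul hv.ennreal_ofReal (by simp)]
    simp only [ENNReal.toReal_ofReal (hv₀ _), smul_eq_mul, mul_comm]
  have hmass := hintegral fun _ => 1
  simp only [integral_const, smul_eq_mul, mul_one, one_mul] at hmass
  rw [average_eq, hintegral, hmass, smul_eq_mul, inv_mul_eq_div]

lemma absolutelyContinuous_withDensity_ofReal (hv : Measurable v) (hv₀ : ∀ y, 0 < v y) :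
    ν ≪ ν.withDensity fun y => ENNReal.ofReal (v y) :=
  withDensity_absolutelyContinuous' hv.ennreal_ofReal.aemeasurable
    (.of_forall fun y => (ENNReal.ofReal_pos.2 (hv₀ y)).ne')

end WithDensity

section Jensen

variable {X : Type*} [TopologicalSpace X] [CompactSpace X]

lemma exists_Icc_subset_of_continuous {s : Set ℝ} (hs : Convex ℝ s) {f : X → ℝ}
    (hf : Continuous f) (hfs : ∀ x, f x ∈ s) :
    ∃ a b, Icc a b ⊆ s ∧ ∀ x, f x ∈ Icc a b := by
  rcases isEmpty_or_nonempty X with hX | hX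
  · exact ⟨1, 0, by simp, hX.elim⟩
  · obtain ⟨x, -, hx⟩ := isCompact_univ.exists_isMinOn univ_nonempty hf.continuousOn
    obtain ⟨y, -, hy⟩ := isCompact_univ.exists_isMaxOn univ_nonempty hf.continuousOn
    exact ⟨f x, f y, hs.ordConnected.out (hfs x) (hfs y),
      fun z => ⟨hx (mem_univ z), hy (mem_univ z)⟩⟩

variable [MeasurableSpace X] [OpensMeasurableSpace X] {μ : Measure X} [IsFiniteMeasure μ]

lemma integrable_of_continuous_of_compactSpace {G : Type*} [NormedAddCommGroup G] {f : X → G}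
    (hf : Continuous f) : Integrable f μ :=
  hf.integrable_of_hasCompactSupport (.of_compactSpace f)

variable {s : Set ℝ} {f w : X → ℝ} {ψ : ℝ → ℝ}

lemma map_average_le_of_convexOn_isOpen [NeZero μ] (hψ : ConvexOn ℝ s ψ) (hs : IsOpen s)
    (hf : Continuous f) (hfs : ∀ x, f x ∈ s) : ψ (⨍ x, f x ∂μ) ≤ ⨍ x, ψ (f x) ∂μ := by
  obtain ⟨a, b, hab, hfab⟩ := exists_Icc_subset_of_continuous hψ.1 hf hfs
  have hψc := hψ.continuousOn hs
  exact (hψ.subset hab (convex_Icc a b)).map_average_le (hψc.mono hab) isClosed_Icc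
    (.of_forall hfab) (integrable_of_continuous_of_compactSpace hf)
    (integrable_of_continuous_of_compactSpace (hψc.comp_continuous hf hfs))

lemma eq_average_of_strictConvexOn_isOpen [μ.IsOpenPosMeasure] (hψ : StrictConvexOn ℝ s ψ)
    (hs : IsOpen s) (hf : Continuous f) (hfs : ∀ x, f x ∈ s)
    (heq : ψ (⨍ x, f x ∂μ) = ⨍ x, ψ (f x) ∂μ) (x : X) : f x = ⨍ x, f x ∂μ := by
  obtain ⟨a, b, hab, hfab⟩ := exists_Icc_subset_of_continuous hψ.1 hf hfs
  have hψc := hψ.convexOn.continuousOn hs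
  have hconst := ((hψ.subset hab (convex_Icc a b)).ae_eq_const_or_map_average_lt (hψc.mono hab)
    isClosed_Icc (.of_forall hfab) (integrable_of_continuous_of_compactSpace hf)
    (integrable_of_continuous_of_compactSpace (hψc.comp_continuous hf hfs))).resolve_right
      heq.not_lt
  exact congrFun (hf.ae_eq_iff_eq μ continuous_const |>.1 hconst) x

lemma map_integral_mul_div_integral_le_of_convexOn [NeZero μ] (hψ : ConvexOn ℝ s ψ) (hs : IsOpen s)
    (hf : Continuous f) (hfs : ∀ x, f x ∈ s) (hw : Continuous w) (hw₀ : ∀ x, 0 < w x) :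
    ψ ((∫ x, f x * w x ∂μ) / ∫ x, w x ∂μ) ≤ (∫ x, ψ (f x) * w x ∂μ) / ∫ x, w x ∂μ := by
  have hac := absolutelyContinuous_withDensity_ofReal (ν := μ) hw.measurable hw₀
  have : NeZero (μ.withDensity fun x => ENNReal.ofReal (w x)) :=
    ⟨fun h => NeZero.ne μ (Measure.absolutelyContinuous_zero_iff.1 (h ▸ hac))⟩
  have := isFiniteMeasure_withDensity_ofReal
    (integrable_of_continuous_of_compactSpace (μ := μ) hw).hasFiniteIntegral
  simpa only [average_withDensity_ofReal hw.measurable fun x => (hw₀ x).le] using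
    map_average_le_of_convexOn_isOpen (μ := μ.withDensity fun x => ENNReal.ofReal (w x))
      hψ hs hf hfs

lemma eq_integral_mul_div_integral_of_strictConvexOn [μ.IsOpenPosMeasure]
    (hψ : StrictConvexOn ℝ s ψ) (hs : IsOpen s) (hf : Continuous f) (hfs : ∀ x, f x ∈ s)
    (hw : Continuous w) (hw₀ : ∀ x, 0 < w x)
    (heq : ψ ((∫ x, f x * w x ∂μ) / ∫ x, w x ∂μ) = (∫ x, ψ (f x) * w x ∂μ) / ∫ x, w x ∂μ)
    (x : X) : f x = (∫ x, f x * w x ∂μ) / ∫ x, w x ∂μ := by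
  have := (absolutelyContinuous_withDensity_ofReal (ν := μ) hw.measurable hw₀).isOpenPosMeasure
  have := isFiniteMeasure_withDensity_ofReal
    (integrable_of_continuous_of_compactSpace (μ := μ) hw).hasFiniteIntegral
  simp only [← average_withDensity_ofReal hw.measurable fun x => (hw₀ x).le] at heq ⊢
  exact eq_average_of_strictConvexOn_isOpen hψ hs hf hfs heq x

lemma integral_pos_of_continuous_of_pos [NeZero μ] (hw : Continuous w) (hw₀ : ∀ x, 0 < w x) :
    0 < ∫ x, w x ∂μ := by
  rw [integral_pos_iff_support_of_nonneg (fun x => (hw₀ x).le)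
    (integrable_of_continuous_of_compactSpace hw),
    Function.support_eq_univ fun x => (hw₀ x).ne']
  exact Measure.measure_univ_pos.2 (NeZero.ne μ)

end Jensen

/-- `ρ` is the radial function of a star body, as a function of the direction `u : X`. -/
structure IsStarRadial {X : Type*} [TopologicalSpace X] (ρ : X → ℝ) : Prop where
  continuous : Continuous ρ
  pos : ∀ u, 0 < ρ u

/-- In terms of radial functions, `Q = K +̂_φ L` is the Orlicz harmonic sum of `K` and `L`. -/
def IsOrliczHarmonicSum {X : Type*} (φ : ℝ → ℝ) (ρK ρL ρQ : X → ℝ) : Prop :=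
  ∀ u, φ (ρK u / ρQ u) + φ (ρL u / ρQ u) = φ 1

section StarRadial

variable {X : Type*} [TopologicalSpace X] {φ : ℝ → ℝ} {ρK ρL ρM ρQ : X → ℝ}

lemma IsStarRadial.continuous_rpow (hρ : IsStarRadial ρM) (p : ℝ) :
    Continuous fun u => ρM u ^ p :=
  hρ.continuous.rpow_const fun u => .inl (hρ.pos u).ne'

lemma IsStarRadial.continuous_div (hM : IsStarRadial ρM) (hQ : IsStarRadial ρQ) :
    Continuous fun u => ρM u / ρQ u :=
  hM.continuous.div hQ.continuous fun u => (hQ.pos u).ne'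

lemma IsStarRadial.div_pos (hM : IsStarRadial ρM) (hQ : IsStarRadial ρQ) (u : X) :
    0 < ρM u / ρQ u :=
  _root_.div_pos (hM.pos u) (hQ.pos u)

lemma IsOrliczHarmonicSum.exists_dilate [Nonempty X] (hsum : IsOrliczHarmonicSum φ ρK ρL ρQ)
    (hanti : StrictAntiOn φ (Ioi 0)) (hL : IsStarRadial ρL) (hQ : IsStarRadial ρQ) {e : ℝ}
    (he : 0 < e) (hKL : ∀ u, ρK u = e * ρL u) : ∃ t, 0 < t ∧ ∀ u, ρL u = t * ρQ u := by
  have hinj : InjOn (fun x => φ (e * x) + φ x) (Ioi 0) :=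
    StrictAntiOn.injOn fun x hx y hy hxy => add_lt_add
      (hanti (mul_pos he hx) (mul_pos he hy) (mul_lt_mul_of_pos_left hxy he)) (hanti hx hy hxy)
  have hvalue (u : X) : φ (e * (ρL u / ρQ u)) + φ (ρL u / ρQ u) = φ 1 := by
    rw [← hsum u, hKL u, mul_div_assoc]
  obtain ⟨u₀⟩ := ‹Nonempty X›
  refine ⟨ρL u₀ / ρQ u₀, hL.div_pos hQ u₀, fun u => ?_⟩
  rw [← div_eq_iff (hQ.pos u).ne']
  exact hinj (hL.div_pos hQ u) (hL.div_pos hQ u₀) ((hvalue u).trans (hvalue u₀).symm)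

end StarRadial

section DualQuermassintegrals

variable {X : Type*} [MeasurableSpace X]

/-- The dual quermassintegral `W̃ᵢ` of the star body with radial function `ρ`, where `p = n - i`.
The surface measure is replaced by any measure `μ` on the set of directions, and the factor `1 / n`
is omitted, since only ratios of dual quermassintegrals matter. -/
noncomputable def dualQuermass (μ : Measure X) (p : ℝ) (ρ : X → ℝ) : ℝ :=
  ∫ u, ρ u ^ p ∂μ

/-- The dual Orlicz mixed quermassintegral `W̃_{φ,i}(Q, M)` of the star bodies with radial functions
`ρQ` and `ρM`, where `p = n - i`, normalised as `dualQuermass`. -/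
noncomputable def dualOrliczQuermass (μ : Measure X) (p : ℝ) (φ : ℝ → ℝ) (ρQ ρM : X → ℝ) : ℝ :=
  ∫ u, φ (ρM u / ρQ u) * ρQ u ^ p ∂μ

/-- `(W̃ᵢ(M) / W̃ᵢ(Q))^{1/(n-i)}`, where `p = n - i`: the factor by which `Q` has to be dilated to
have the same dual quermassintegral as `M`. -/
noncomputable def dualRadiusRatio (μ : Measure X) (p : ℝ) (ρM ρQ : X → ℝ) : ℝ :=
  (dualQuermass μ p ρM / dualQuermass μ p ρQ) ^ p⁻¹

variable {μ : Measure X} {p : ℝ} {φ : ℝ → ℝ} {ρK ρL ρM ρQ : X → ℝ}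

lemma dualRadiusRatio_natCast {c : ℝ} (hc : c ≠ 0) (k : ℕ) :
    dualRadiusRatio μ k ρM ρQ =
      ((c * ∫ u, ρM u ^ k ∂μ) / (c * ∫ u, ρQ u ^ k ∂μ)) ^ (k : ℝ)⁻¹ := by
  simp only [dualRadiusRatio, dualQuermass, rpow_natCast, mul_div_mul_left _ _ hc]

lemma dualQuermass_eq_integral_div_rpow_mul (hM : ∀ u, 0 < ρM u) (hQ : ∀ u, 0 < ρQ u) :
    dualQuermass μ p ρM = ∫ u, (ρM u / ρQ u) ^ p * ρQ u ^ p ∂μ := by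
  refine integral_congr_ae (.of_forall fun u => ?_)
  simp only
  rw [← mul_rpow (div_pos (hM u) (hQ u)).le (hQ u).le, div_mul_cancel₀ _ (hQ u).ne']

lemma dualOrliczQuermass_eq_integral_comp_rpow (hp : p ≠ 0) (hM : ∀ u, 0 < ρM u)
    (hQ : ∀ u, 0 < ρQ u) :
    dualOrliczQuermass μ p φ ρQ ρM = ∫ u, φ (((ρM u / ρQ u) ^ p) ^ p⁻¹) * ρQ u ^ p ∂μ := by
  simp only [dualOrliczQuermass, rpow_rpow_inv (div_pos (hM _) (hQ _)).le hp]

variable [TopologicalSpace X] [CompactSpace X] [OpensMeasurableSpace X] [IsFiniteMeasure μ]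

lemma IsStarRadial.dualQuermass_pos [NeZero μ] (hρ : IsStarRadial ρM) : 0 < dualQuermass μ p ρM :=
  integral_pos_of_continuous_of_pos (hρ.continuous_rpow p) fun u => rpow_pos_of_pos (hρ.pos u) p

lemma dualRadiusRatio_eq_of_dilate [NeZero μ] (hp : p ≠ 0) (hQ : IsStarRadial ρQ) {c : ℝ}
    (hc : 0 ≤ c) (hM : ∀ u, ρM u = c * ρQ u) : dualRadiusRatio μ p ρM ρQ = c := by
  have hscale : dualQuermass μ p ρM = c ^ p * dualQuermass μ p ρQ := by
    simp only [dualQuermass, hM, mul_rpow hc (hQ.pos _).le, integral_const_mul]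
  rw [dualRadiusRatio, hscale, mul_div_cancel_right₀ _ hQ.dualQuermass_pos.ne',
    rpow_rpow_inv hc hp]

-- The dual Orlicz–Minkowski inequality: Jensen for `t ↦ φ (t ^ p⁻¹)` and the weight `ρQ ^ p`.
lemma map_dualRadiusRatio_mul_dualQuermass_le [NeZero μ] (hp : 1 ≤ p)
    (hφ : ConvexOn ℝ (Ioi 0) φ) (hanti : AntitoneOn φ (Ioi 0))
    (hM : IsStarRadial ρM) (hQ : IsStarRadial ρQ) :
    φ (dualRadiusRatio μ p ρM ρQ) * dualQuermass μ p ρQ ≤ dualOrliczQuermass μ p φ ρQ ρM := by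
  have hp₀ := one_pos.trans_le hp
  rw [← le_div_iff₀ hQ.dualQuermass_pos, dualRadiusRatio,
    dualQuermass_eq_integral_div_rpow_mul hM.pos hQ.pos,
    dualOrliczQuermass_eq_integral_comp_rpow hp₀.ne' hM.pos hQ.pos]
  exact map_integral_mul_div_integral_le_of_convexOn
    (convexOn_comp_rpow hφ hanti (inv_pos.2 hp₀) (inv_le_one_of_one_le₀ hp)) isOpen_Ioi
    ((hM.continuous_div hQ).rpow_const fun u => .inl (hM.div_pos hQ u).ne')
    (fun u => rpow_pos_of_pos (hM.div_pos hQ u) p) (hQ.continuous_rpow p)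
    (fun u => rpow_pos_of_pos (hQ.pos u) p)

lemma eq_dualRadiusRatio_mul_of_map_mul_dualQuermass_eq [μ.IsOpenPosMeasure]
    (hp : 1 ≤ p) (hφ : StrictConvexOn ℝ (Ioi 0) φ) (hanti : AntitoneOn φ (Ioi 0))
    (hM : IsStarRadial ρM) (hQ : IsStarRadial ρQ)
    (heq : φ (dualRadiusRatio μ p ρM ρQ) * dualQuermass μ p ρQ = dualOrliczQuermass μ p φ ρQ ρM)
    (u : X) : ρM u = dualRadiusRatio μ p ρM ρQ * ρQ u := by
  have : Nonempty X := ⟨u⟩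
  have hp₀ := one_pos.trans_le hp
  rw [← eq_div_iff hQ.dualQuermass_pos.ne', dualRadiusRatio,
    dualQuermass_eq_integral_div_rpow_mul hM.pos hQ.pos,
    dualOrliczQuermass_eq_integral_comp_rpow hp₀.ne' hM.pos hQ.pos] at heq
  have hconst : (ρM u / ρQ u) ^ p = dualQuermass μ p ρM / dualQuermass μ p ρQ := by
    rw [dualQuermass_eq_integral_div_rpow_mul hM.pos hQ.pos]
    exact eq_integral_mul_div_integral_of_strictConvexOn
      (strictConvexOn_comp_rpow hφ hanti (inv_pos.2 hp₀) (inv_le_one_of_one_le₀ hp)) isOpen_Ioi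
      ((hM.continuous_div hQ).rpow_const fun u => .inl (hM.div_pos hQ u).ne')
      (fun u => rpow_pos_of_pos (hM.div_pos hQ u) p) (hQ.continuous_rpow p)
      (fun u => rpow_pos_of_pos (hQ.pos u) p) heq u
  rw [dualRadiusRatio, ← hconst, rpow_rpow_inv (hM.div_pos hQ u).le hp₀.ne',
    div_mul_cancel₀ _ (hQ.pos u).ne']

lemma IsOrliczHarmonicSum.dualOrliczQuermass_add (hsum : IsOrliczHarmonicSum φ ρK ρL ρQ)
    (hφ : ContinuousOn φ (Ioi 0)) (hK : IsStarRadial ρK) (hL : IsStarRadial ρL)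
    (hQ : IsStarRadial ρQ) :
    dualOrliczQuermass μ p φ ρQ ρK + dualOrliczQuermass μ p φ ρQ ρL =
      φ 1 * dualQuermass μ p ρQ := by
  have hint {ρ : X → ℝ} (hρ : IsStarRadial ρ) :
      Integrable (fun u => φ (ρ u / ρQ u) * ρQ u ^ p) μ :=
    integrable_of_continuous_of_compactSpace
      ((hφ.comp_continuous (hρ.continuous_div hQ) (hρ.div_pos hQ)).mul (hQ.continuous_rpow p))
  simp only [dualOrliczQuermass, dualQuermass]
  rw [← integral_add (hint hK) (hint hL), ← integral_const_mul]
  simp only [← add_mul, hsum _]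

lemma IsOrliczHarmonicSum.map_dualRadiusRatio_add_le [NeZero μ] (hp : 1 ≤ p)
    (hφ : ConvexOn ℝ (Ioi 0) φ) (hanti : AntitoneOn φ (Ioi 0))
    (hsum : IsOrliczHarmonicSum φ ρK ρL ρQ)
    (hK : IsStarRadial ρK) (hL : IsStarRadial ρL) (hQ : IsStarRadial ρQ) :
    φ (dualRadiusRatio μ p ρK ρQ) + φ (dualRadiusRatio μ p ρL ρQ) ≤ φ 1 := by
  refine le_of_mul_le_mul_right ?_ (hQ.dualQuermass_pos (μ := μ) (p := p))
  rw [add_mul, ← hsum.dualOrliczQuermass_add (hφ.continuousOn isOpen_Ioi) hK hL hQ]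
  exact add_le_add (map_dualRadiusRatio_mul_dualQuermass_le hp hφ hanti hK hQ)
    (map_dualRadiusRatio_mul_dualQuermass_le hp hφ hanti hL hQ)

lemma IsOrliczHarmonicSum.dilates_of_map_dualRadiusRatio_add_eq
    [μ.IsOpenPosMeasure] [Nonempty X] (hp : 1 ≤ p)
    (hφ : StrictConvexOn ℝ (Ioi 0) φ) (hanti : AntitoneOn φ (Ioi 0))
    (hsum : IsOrliczHarmonicSum φ ρK ρL ρQ)
    (hK : IsStarRadial ρK) (hL : IsStarRadial ρL) (hQ : IsStarRadial ρQ)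
    (heq : φ 1 = φ (dualRadiusRatio μ p ρK ρQ) + φ (dualRadiusRatio μ p ρL ρQ)) :
    ∃ c, 0 < c ∧ ∀ u, ρK u = c * ρL u := by
  have hadd := hsum.dualOrliczQuermass_add (μ := μ) (p := p)
    (hφ.convexOn.continuousOn isOpen_Ioi) hK hL hQ
  rw [heq, add_mul] at hadd
  obtain ⟨hKeq, hLeq⟩ := (add_eq_add_iff_eq_and_eq
    (map_dualRadiusRatio_mul_dualQuermass_le hp hφ.convexOn hanti hK hQ)
    (map_dualRadiusRatio_mul_dualQuermass_le hp hφ.convexOn hanti hL hQ)).1 hadd.symm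
  have hratio_pos {ρ : X → ℝ} (hρ : IsStarRadial ρ) : 0 < dualRadiusRatio μ p ρ ρQ :=
    rpow_pos_of_pos (div_pos hρ.dualQuermass_pos hQ.dualQuermass_pos) _
  refine ⟨_, div_pos (hratio_pos hK) (hratio_pos hL), fun u => ?_⟩
  have hKQ := eq_dualRadiusRatio_mul_of_map_mul_dualQuermass_eq hp hφ hanti hK hQ hKeq u
  have hLQ := eq_dualRadiusRatio_mul_of_map_mul_dualQuermass_eq hp hφ hanti hL hQ hLeq u
  calc ρK u = dualRadiusRatio μ p ρK ρQ / dualRadiusRatio μ p ρL ρQ *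
        (dualRadiusRatio μ p ρL ρQ * ρQ u) := by
        rw [← mul_assoc, div_mul_cancel₀ _ (hratio_pos hL).ne', ← hKQ]
    _ = dualRadiusRatio μ p ρK ρQ / dualRadiusRatio μ p ρL ρQ * ρL u := by rw [← hLQ]

lemma IsOrliczHarmonicSum.map_dualRadiusRatio_add_eq_of_dilates [NeZero μ] [Nonempty X]
    (hp : p ≠ 0) (hanti : StrictAntiOn φ (Ioi 0)) (hsum : IsOrliczHarmonicSum φ ρK ρL ρQ)
    (hL : IsStarRadial ρL) (hQ : IsStarRadial ρQ) {e : ℝ} (he : 0 < e)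
    (hKL : ∀ u, ρK u = e * ρL u) :
    φ 1 = φ (dualRadiusRatio μ p ρK ρQ) + φ (dualRadiusRatio μ p ρL ρQ) := by
  obtain ⟨t, ht, hLQ⟩ := hsum.exists_dilate hanti hL hQ he hKL
  have hKQ (u : X) : ρK u = e * t * ρQ u := by rw [hKL, hLQ, mul_assoc]
  rw [dualRadiusRatio_eq_of_dilate hp hQ (mul_pos he ht).le hKQ,
    dualRadiusRatio_eq_of_dilate hp hQ ht.le hLQ]
  obtain ⟨u⟩ := ‹Nonempty X›
  rw [← hsum u, hKQ, hLQ, mul_div_cancel_right₀ _ (hQ.pos u).ne',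
    mul_div_cancel_right₀ _ (hQ.pos u).ne']

theorem dual_orlicz_brunn_minkowski_quermassintegral_general
    [μ.IsOpenPosMeasure] [Nonempty X] (hp : 1 ≤ p)
    (hφ : ConvexOn ℝ (Ioi 0) φ) (hanti : AntitoneOn φ (Ioi 0))
    (hK : IsStarRadial ρK) (hL : IsStarRadial ρL) (hQ : IsStarRadial ρQ)
    (hsum : IsOrliczHarmonicSum φ ρK ρL ρQ) :
    φ 1 ≥ φ (dualRadiusRatio μ p ρK ρQ) + φ (dualRadiusRatio μ p ρL ρQ) ∧
      (StrictConvexOn ℝ (Ioi 0) φ →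
        (φ 1 = φ (dualRadiusRatio μ p ρK ρQ) + φ (dualRadiusRatio μ p ρL ρQ) ↔
          ∃ c : ℝ, 0 < c ∧ ∀ u, ρK u = c * ρL u)) :=
  ⟨hsum.map_dualRadiusRatio_add_le hp hφ hanti hK hL hQ, fun hstrict =>
    ⟨hsum.dilates_of_map_dualRadiusRatio_add_eq hp hstrict hanti hK hL hQ, fun ⟨_, hc, hKL⟩ =>
      hsum.map_dualRadiusRatio_add_eq_of_dilates (one_pos.trans_le hp).ne'
        (strictAntiOn_of_strictConvexOn_of_antitoneOn hstrict hanti) hL hQ hc hKL⟩⟩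

end DualQuermassintegrals

/-- Dual Orlicz–Brunn–Minkowski inequality for dual quermassintegrals, for the Orlicz
harmonic sum `Q = K +̂_φ L`:
`φ(1) ≥ φ((W̃ᵢ(K)/W̃ᵢ(Q))^{1/(n-i)}) + φ((W̃ᵢ(L)/W̃ᵢ(Q))^{1/(n-i)})`;
if `φ` is strictly convex, equality holds iff `K` and `L` are dilates. -/
theorem dual_orlicz_brunn_minkowski_quermassintegral
    (n i : ℕ) (hi : i < n)
    (φ : ℝ → ℝ)
    (hφconv : ConvexOn ℝ (Ioi 0) φ)
    (hφanti : StrictAntiOn φ (Ioi 0))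
    (hφpos : ∀ t ∈ Ioi (0 : ℝ), 0 < φ t)
    (ρK ρL ρQ : sphere (0 : EuclideanSpace ℝ (Fin n)) 1 → ℝ)
    (hKc : Continuous ρK) (hLc : Continuous ρL) (hQc : Continuous ρQ)
    (hKpos : ∀ u, 0 < ρK u) (hLpos : ∀ u, 0 < ρL u) (hQpos : ∀ u, 0 < ρQ u)
    (hsum : ∀ u, φ (ρK u / ρQ u) + φ (ρL u / ρQ u) = φ 1)
    (WK WL WQ : ℝ)
    (hWK : WK = (1 / n) * ∫ u, (ρK u) ^ (n - i) ∂(sphereσ n))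
    (hWL : WL = (1 / n) * ∫ u, (ρL u) ^ (n - i) ∂(sphereσ n))
    (hWQ : WQ = (1 / n) * ∫ u, (ρQ u) ^ (n - i) ∂(sphereσ n)) :
    φ 1 ≥ φ ((WK / WQ) ^ (((n : ℝ) - i)⁻¹)) + φ ((WL / WQ) ^ (((n : ℝ) - i)⁻¹)) ∧
      (StrictConvexOn ℝ (Ioi 0) φ →
        (φ 1 = φ ((WK / WQ) ^ (((n : ℝ) - i)⁻¹)) + φ ((WL / WQ) ^ (((n : ℝ) - i)⁻¹)) ↔
          ∃ c : ℝ, 0 < c ∧ ∀ u, ρK u = c * ρL u)) := by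
  have hn : n ≠ 0 := (Nat.zero_le i |>.trans_lt hi).ne'
  have : NeZero n := ⟨hn⟩
  have : Nonempty (sphere (0 : EuclideanSpace ℝ (Fin n)) 1) :=
    (NormedSpace.sphere_nonempty.2 zero_le_one).to_subtype
  have hfactor : (1 / n : ℝ) ≠ 0 := one_div_ne_zero (Nat.cast_ne_zero.2 hn)
  rw [hWK, hWL, hWQ, ← Nat.cast_sub hi.le, ← dualRadiusRatio_natCast hfactor,
    ← dualRadiusRatio_natCast hfactor]
  exact dual_orlicz_brunn_minkowski_quermassintegral_general
    (Nat.one_le_cast.2 (Nat.sub_pos_of_lt hi)) hφconv hφanti.antitoneOn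
    ⟨hKc, hKpos⟩ ⟨hLc, hLpos⟩ ⟨hQc, hQpos⟩ hsum
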